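/- Let E be a real inner product space, let κ and K be real numbers with 0 ≤ κ ≤ K, and let u₁, u₂, v₁, v₂ ∈ E. Then (K−κ)⟪u₁,v₁⟫ + (K−κ)⟪u₂,v₂⟫ + κ⟪u₂,v₁⟫ + κ⟪u₁,v₂⟫ ≤ (K/2)(‖u₁‖² + ‖u₂‖²) + (K/2)(‖v₁‖² + ‖v₂‖²). -/

import Mathlib

open RealInnerProductSpace

/-- Young's inequality for the inner product of a real inner product space. -/
theorem real_inner_le_half_norm_sq_add_norm_sq
    {E : Type*} [NormedAddCommGroup E] [InnerProductSpace ℝ E] (x y : E) :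
    ⟪x, y⟫ ≤ (‖x‖ ^ 2 + ‖y‖ ^ 2) / 2 := by
  linarith [norm_sub_sq_real x y, sq_nonneg ‖x - y‖]

/-- Interface cross-term estimate (bound (3.6) in the stability proof of ensemble
algorithm A1): for `0 ≤ κ ≤ K` and elements `u₁ u₂ v₁ v₂` of a real inner product
space, the coupling terms are bounded by `(K/2)` times the sum of squared norms. -/
theorem interface_cross_term_estimate
    {E : Type*} [NormedAddCommGroup E] [InnerProductSpace ℝ E]
    (κ K : ℝ) (hκ : 0 ≤ κ) (hK : κ ≤ K) (u₁ u₂ v₁ v₂ : E) :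
    (K - κ) * ⟪u₁, v₁⟫ + (K - κ) * ⟪u₂, v₂⟫ + κ * ⟪u₂, v₁⟫ + κ * ⟪u₁, v₂⟫ ≤
      (K / 2) * (‖u₁‖ ^ 2 + ‖u₂‖ ^ 2) + (K / 2) * (‖v₁‖ ^ 2 + ‖v₂‖ ^ 2) := by
  have hK' : 0 ≤ K - κ := sub_nonneg.mpr hK
  linarith [mul_le_mul_of_nonneg_left (real_inner_le_half_norm_sq_add_norm_sq u₁ v₁) hK',
    mul_le_mul_of_nonneg_left (real_inner_le_half_norm_sq_add_norm_sq u₂ v₂) hK',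
    mul_le_mul_of_nonneg_left (real_inner_le_half_norm_sq_add_norm_sq u₂ v₁) hκ,
    mul_le_mul_of_nonneg_left (real_inner_le_half_norm_sq_add_norm_sq u₁ v₂) hκ]
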